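/- For every τ ∈ ℍ, the quasi-period η₁(τ) is a holomorphic function of τ and satisfies dη₁/dτ = (i/(4π))[2η₁(τ)² − (1/6)g₂(τ)]. -/

import Mathlib

open Complex Filter Topology Asymptotics

noncomputable section

/-- membership in the lattice `Λ_τ = ℤ + τℤ`. -/
def InLattice (τ z : ℂ) : Prop := ∃ m n : ℤ, z = (m : ℂ) + (n : ℂ) * τ

/-- the half-period generators `ω₀ = 0, ω₁ = 1, ω₂ = τ, ω₃ = 1 + τ`. -/
def halfp (τ : ℂ) : Fin 4 → ℂ := ![0, 1, τ, 1 + τ]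

/-- the Weierstrass elliptic function `℘(z|τ)`. -/
def wp (τ z : ℂ) : ℂ :=
  z⁻¹ ^ 2 + ∑' w : {w : ℤ × ℤ // w ≠ 0},
    ((z - ((w.1.1 : ℂ) + (w.1.2 : ℂ) * τ))⁻¹ ^ 2 - ((w.1.1 : ℂ) + (w.1.2 : ℂ) * τ)⁻¹ ^ 2)

/-- `℘′(z|τ)`, the `z`-derivative of `℘`. -/
def wpd (τ z : ℂ) : ℂ := deriv (wp τ) z

/-- `℘″(z|τ)`. -/
def wpdd (τ z : ℂ) : ℂ := deriv (wpd τ) z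

def e1 (τ : ℂ) : ℂ := wp τ (1 / 2)
def e2 (τ : ℂ) : ℂ := wp τ (τ / 2)
def e3 (τ : ℂ) : ℂ := wp τ ((1 + τ) / 2)

def g2 (τ : ℂ) : ℂ := -4 * (e1 τ * e2 τ + e1 τ * e3 τ + e2 τ * e3 τ)

/-- `zeta` is the Weierstrass zeta function: for each `τ ∈ ℍ`, `zeta τ` is odd, satisfies
`∂ζ/∂z = -℘` off the lattice, and `ζ(z|τ) - 1/z → 0` as `z → 0`. -/
def IsWeierstrassZeta (zeta : ℂ → ℂ → ℂ) : Prop :=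
  ∀ τ : ℂ, 0 < τ.im →
    (∀ z : ℂ, zeta τ (-z) = - zeta τ z) ∧
    (∀ z : ℂ, ¬ InLattice τ z → HasDerivAt (zeta τ) (- wp τ z) z) ∧
    Tendsto (fun z => zeta τ z - z⁻¹) (𝓝[≠] (0 : ℂ)) (𝓝 0)

/-- `eta1 τ = ζ(z+1|τ) - ζ(z|τ)` is the first quasi-period. -/
def IsEta1 (zeta : ℂ → ℂ → ℂ) (eta1 : ℂ → ℂ) : Prop :=
  ∀ τ : ℂ, 0 < τ.im → ∀ z : ℂ, ¬ InLattice τ z →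
    eta1 τ = zeta τ (z + 1) - zeta τ z

/-- `eta2 τ = ζ(z+τ|τ) - ζ(z|τ)` is the second quasi-period. -/
def IsEta2 (zeta : ℂ → ℂ → ℂ) (eta2 : ℂ → ℂ) : Prop :=
  ∀ τ : ℂ, 0 < τ.im → ∀ z : ℂ, ¬ InLattice τ z →
    eta2 τ = zeta τ (z + τ) - zeta τ z

/-- `sigma` is the Weierstrass sigma function: entire, odd, with
`∂/∂z log σ = ζ` off the lattice and `σ(z|τ)/z → 1` as `z → 0`. -/
def IsWeierstrassSigma (zeta sigma : ℂ → ℂ → ℂ) : Prop :=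
  ∀ τ : ℂ, 0 < τ.im →
    (∀ z : ℂ, sigma τ (-z) = - sigma τ z) ∧
    Differentiable ℂ (sigma τ) ∧
    (∀ z : ℂ, ¬ InLattice τ z → HasDerivAt (sigma τ) (zeta τ z * sigma τ z) z) ∧
    Tendsto (fun z => sigma τ z / z) (𝓝[≠] (0 : ℂ)) (𝓝 1)

/-- the Hamiltonian system (142) for `(p(τ), A(τ))` on `V`. -/
def HamSystem (n : Fin 4 → ℂ) (zeta : ℂ → ℂ → ℂ) (eta1 : ℂ → ℂ)
    (V : Set ℂ) (p A : ℂ → ℂ) : Prop :=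
  ∀ τ ∈ V,
    HasDerivAt p ((-Complex.I / (4 * (Real.pi : ℂ))) *
      (2 * A τ - zeta τ (2 * p τ) + 2 * p τ * eta1 τ)) τ ∧
    HasDerivAt A ((Complex.I / (4 * (Real.pi : ℂ))) *
      ((2 * wp τ (2 * p τ) + 2 * eta1 τ) * A τ - (3 / 2) * wpd τ (2 * p τ)
        - ∑ k : Fin 4, n k * (n k + 1) * wpd τ (p τ + halfp τ k / 2))) τ

/-- the generalized Lamé potential `I(z;τ)`. -/
def Ipot (n : Fin 4 → ℂ) (zeta : ℂ → ℂ → ℂ) (A B p τ z : ℂ) : ℂ :=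
  (∑ k : Fin 4, n k * (n k + 1) * wp τ (z + halfp τ k / 2))
    + (3 / 4) * (wp τ (z + p) + wp τ (z - p))
    + A * (zeta τ (z + p) - zeta τ (z - p)) + B

end

/-
Integrating `℘` termwise along a horizontal period, each row `nτ + ℤ` of the lattice telescopes and
leaves only its Eisenstein sum, so `η₁ = G₂ = (π²/3) E₂`. The values of `℘` at the half-periods are
the distinct roots of `4x³ - g₂x - g₃`, so the lattice invariant `g₂ = (4π⁴/3) E₄` is recovered from
their products. The claim thus becomes Ramanujan's identity `D E₂ = (E₂² - E₄) / 12`, where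
`D = (2πi)⁻¹ d/dτ`: although `E₂` is only quasimodular, `D E₂ - E₂² / 12` is a modular form of
weight 4 and level one, hence a multiple of `E₄`, and its value at `i∞` is `-1/12`.
-/

open scoped PeriodPair

lemma eventuallyEq_zero_of_deriv_deriv_eq_smul {𝕜 E : Type*} [NontriviallyNormedField 𝕜]
    [CharZero 𝕜] [NormedAddCommGroup E] [NormedSpace 𝕜 E] [CompleteSpace E] {f : 𝕜 → E}
    {g : 𝕜 → 𝕜} {a : 𝕜} (hf : AnalyticAt 𝕜 f a) (hg : AnalyticAt 𝕜 g a)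
    (h : deriv (deriv f) =ᶠ[𝓝 a] g • f) (h₀ : f a = 0) (h₁ : deriv f a = 0) : f =ᶠ[𝓝 a] 0 := by
  -- A finite order of vanishing of `f` at `a` would exceed that of `f''` by two.
  have hord : analyticOrderAt g a + analyticOrderAt f a + 1 + 1 = analyticOrderAt f a := by
    have hf₁ := hf.analyticOrderAt_deriv_add_one
    have hf₂ := hf.deriv.analyticOrderAt_deriv_add_one
    simp only [h₀, h₁, sub_zero] at hf₁ hf₂
    rw [← analyticOrderAt_smul hg hf, ← analyticOrderAt_congr h, hf₂, hf₁]
  refine analyticOrderAt_eq_top.mp ?_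
  by_contra htop
  lift analyticOrderAt f a to ℕ using htop with n
  have : (n : ℕ∞) + 1 ≤ n := calc
    (n : ℕ∞) + 1 ≤ analyticOrderAt g a + n + 1 + 1 := by
      gcongr
      exact le_add_self.trans le_self_add
    _ = n := hord
  exact absurd this (by norm_cast; omega)

lemma sum_mul_eq_of_roots_depressed_cubic {R : Type*} [CommRing R] [IsDomain R] {p q x y z : R}
    (hxy : x ≠ y) (hxz : x ≠ z) (hyz : y ≠ z) (hx : x ^ 3 + p * x + q = 0)
    (hy : y ^ 3 + p * y + q = 0) (hz : z ^ 3 + p * z + q = 0) :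
    x * y + x * z + y * z = p := by
  have hxy' : x ^ 2 + x * y + y ^ 2 + p = 0 :=
    (mul_eq_zero_iff_left (sub_ne_zero.mpr hxy)).mp (by linear_combination hx - hy)
  have hxz' : x ^ 2 + x * z + z ^ 2 + p = 0 :=
    (mul_eq_zero_iff_left (sub_ne_zero.mpr hxz)).mp (by linear_combination hx - hz)
  have hsum : x + y + z = 0 :=
    (mul_eq_zero_iff_left (sub_ne_zero.mpr hyz)).mp (by linear_combination hxy' - hxz')
  linear_combination (x + y) * hsum - hxy'

section Weierstrass

variable (L : PeriodPair)

lemma isPreconnected_compl_lattice : IsPreconnected (L.lattice : Set ℂ)ᶜ := by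
  have hcount : (L.lattice : Set ℂ).Countable :=
    Set.countable_coe_iff.mp (.of_equiv _ L.latticeEquivProd.symm.toEquiv)
  exact (hcount.isConnected_compl_of_one_lt_rank (by simp [rank_real_complex])).isPreconnected

lemma eventually_notMem_lattice (z : ℂ) : ∀ᶠ w in 𝓝[≠] z, w ∉ L.lattice := by
  filter_upwards [mem_nhdsWithin_of_mem_nhds (L.compl_lattice_sdiff_singleton_mem_nhds z),
    self_mem_nhdsWithin] with w hw hne hL
  exact hw ⟨hL, hne⟩

lemma not_eventuallyEq_weierstrassP_of_analyticAt {f : ℂ → ℂ} {l : ℂ} (hl : l ∈ L.lattice)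
    (hf : AnalyticAt ℂ f l) : ¬ ℘[L] =ᶠ[𝓝[≠] l] f := by
  intro h
  have hord := hf.meromorphicOrderAt_nonneg
  rw [← meromorphicOrderAt_congr h, L.order_weierstrassP l hl] at hord
  exact absurd hord (by decide)

lemma hasDerivAt_weierstrassP {z : ℂ} (hz : z ∉ L.lattice) : HasDerivAt ℘[L] (℘'[L] z) z := by
  simpa only [L.deriv_weierstrassP] using
    (L.analyticOnNhd_weierstrassP z hz).differentiableAt.hasDerivAt

lemma derivWeierstrassP_mul_deriv {z : ℂ} (hz : z ∉ L.lattice) :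
    ℘'[L] z * deriv ℘'[L] z = ℘'[L] z * (6 * ℘[L] z ^ 2 - L.g₂ / 2) := by
  have hP := hasDerivAt_weierstrassP L hz
  have hP' := (L.analyticOnNhd_derivWeierstrassP z hz).differentiableAt.hasDerivAt
  have hsq : ℘'[L] ^ 2 =ᶠ[𝓝 z] fun w ↦ 4 * ℘[L] w ^ 3 - L.g₂ * ℘[L] w - L.g₃ := by
    filter_upwards [L.isClosed_lattice.isOpen_compl.mem_nhds hz] with w hw
      using L.derivWeierstrassP_sq w hw
  have hderiv := ((hP'.pow 2).congr_of_eventuallyEq hsq.symm).unique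
    ((((hP.pow 3).const_mul 4).sub (hP.const_mul L.g₂)).sub_const L.g₃)
  push_cast at hderiv
  linear_combination hderiv / 2

lemma exists_derivWeierstrassP_ne_zero : ∃ z ∉ L.lattice, ℘'[L] z ≠ 0 := by
  by_contra! h
  obtain ⟨c, hc⟩ := L.isClosed_lattice.isOpen_compl.exists_is_const_of_deriv_eq_zero
    (isPreconnected_compl_lattice L) L.analyticOnNhd_weierstrassP.differentiableOn
    (fun z hz ↦ by simpa using h z hz)
  refine not_eventuallyEq_weierstrassP_of_analyticAt L (zero_mem _) (analyticAt_const (v := c)) ?_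
  filter_upwards [eventually_notMem_lattice L 0] with z hz using hc z hz

lemma hasDerivAt_derivWeierstrassP {z : ℂ} (hz : z ∉ L.lattice) :
    HasDerivAt ℘'[L] (6 * ℘[L] z ^ 2 - L.g₂ / 2) z := by
  have hP' := L.analyticOnNhd_derivWeierstrassP
  have hmul : ∀ w ∈ (L.lattice : Set ℂ)ᶜ,
      ℘'[L] w * (deriv ℘'[L] w - (6 * ℘[L] w ^ 2 - L.g₂ / 2)) = 0 := fun w hw ↦ by
    rw [mul_sub, derivWeierstrassP_mul_deriv L hw, sub_self]
  rcases AnalyticOnNhd.eq_zero_or_eq_zero_of_mul_eq_zero hP'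
    (hP'.deriv.sub ((analyticOnNhd_const.mul (L.analyticOnNhd_weierstrassP.pow 2)).sub
      analyticOnNhd_const)) hmul (isPreconnected_compl_lattice L) with h | h
  · obtain ⟨w, hw, hne⟩ := exists_derivWeierstrassP_ne_zero L
    exact absurd (h w hw) hne
  · exact (hP' z hz).differentiableAt.hasDerivAt.congr_deriv (sub_eq_zero.mp (h z hz))

lemma derivWeierstrassP_eq_zero_of_two_mul_mem {a : ℂ} (ha : 2 * a ∈ L.lattice) :
    ℘'[L] a = 0 := by
  have h := L.derivWeierstrassP_add_coe (-a) ⟨_, ha⟩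
  rw [L.derivWeierstrassP_neg, show -a + 2 * a = a by ring] at h
  linear_combination h / 2

lemma analyticAt_weierstrassP_add {d z : ℂ} (h : z + d ∉ L.lattice) :
    AnalyticAt ℂ (fun w ↦ ℘[L] (w + d)) z :=
  (L.analyticOnNhd_weierstrassP _ h).comp_of_eq (f := (· + d)) (by fun_prop) rfl

lemma not_eventuallyEq_weierstrassP_add {d : ℂ} (hd : d ∉ L.lattice) (a : ℂ) :
    ¬ ℘[L] =ᶠ[𝓝 a] fun z ↦ ℘[L] (z + d) := by
  intro h
  have hmero : Meromorphic fun z ↦ ℘[L] z - ℘[L] (z + d) := fun z ↦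
    (L.meromorphic_weierstrassP z).sub
      ((L.meromorphic_weierstrassP (z + d)).comp_analyticAt (f := ℘[L]) (g := (· + d))
        (by fun_prop))
  have htop : meromorphicOrderAt (fun z ↦ ℘[L] z - ℘[L] (z + d)) 0 = ⊤ := by
    by_contra hne
    refine hmero.exists_meromorphicOrderAt_ne_top_iff_forall.mp ⟨0, hne⟩ a ?_
    refine meromorphicOrderAt_eq_top_iff.mpr (.filter_mono nhdsWithin_le_nhds ?_)
    filter_upwards [h] with z hz using sub_eq_zero.mpr hz
  refine not_eventuallyEq_weierstrassP_of_analyticAt L (zero_mem _)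
    (analyticAt_weierstrassP_add L (d := d) (by rwa [zero_add])) ?_
  filter_upwards [meromorphicOrderAt_eq_top_iff.mp htop] with z hz using sub_eq_zero.mp hz

lemma weierstrassP_eventuallyEq_add_of_two_mul_mem {a d : ℂ} (ha : a ∉ L.lattice)
    (had : a + d ∉ L.lattice) (ha₂ : 2 * a ∈ L.lattice) (had₂ : 2 * (a + d) ∈ L.lattice)
    (heq : ℘[L] a = ℘[L] (a + d)) : ℘[L] =ᶠ[𝓝 a] fun z ↦ ℘[L] (z + d) := by
  -- Both sides solve `y'' = 6y² - g₂/2` with the same value and vanishing derivative at `a`.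
  let w : ℂ → ℂ := fun z ↦ ℘[L] z - ℘[L] (z + d)
  have han := L.analyticOnNhd_weierstrassP a ha
  have han_add := analyticAt_weierstrassP_add L had
  have hcompl := L.isClosed_lattice.isOpen_compl
  have hev : ∀ᶠ z in 𝓝 a, z ∉ L.lattice ∧ z + d ∉ L.lattice :=
    (hcompl.eventually_mem ha).and
      ((continuousAt_id.add continuousAt_const).eventually (hcompl.eventually_mem had))
  have hw : deriv w =ᶠ[𝓝 a] fun z ↦ ℘'[L] z - ℘'[L] (z + d) := by
    filter_upwards [hev] with z ⟨hz, hzd⟩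
    exact ((hasDerivAt_weierstrassP L hz).sub
      ((hasDerivAt_weierstrassP L hzd).comp_add_const z d)).deriv
  have hw' : deriv (deriv w) =ᶠ[𝓝 a] (fun z ↦ 6 * (℘[L] z + ℘[L] (z + d))) • w := by
    filter_upwards [hw.deriv, hev] with z hderiv ⟨hz, hzd⟩
    refine hderiv.trans (((hasDerivAt_derivWeierstrassP L hz).sub
      ((hasDerivAt_derivWeierstrassP L hzd).comp_add_const z d)).deriv.trans ?_)
    simp only [w, Pi.smul_apply', smul_eq_mul]
    ring
  have hwa : deriv w a = 0 := by
    rw [hw.eq_of_nhds, derivWeierstrassP_eq_zero_of_two_mul_mem L ha₂,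
      derivWeierstrassP_eq_zero_of_two_mul_mem L had₂, sub_zero]
  filter_upwards [eventuallyEq_zero_of_deriv_deriv_eq_smul (han.sub han_add)
    (analyticAt_const.mul (han.add han_add)) hw' (sub_eq_zero.mpr heq) hwa] with z hz
    using sub_eq_zero.mp hz

lemma weierstrassP_ne_of_two_mul_mem {a b : ℂ} (ha : a ∉ L.lattice) (hb : b ∉ L.lattice)
    (ha₂ : 2 * a ∈ L.lattice) (hb₂ : 2 * b ∈ L.lattice) (hab : b - a ∉ L.lattice) :
    ℘[L] a ≠ ℘[L] b := by
  intro heq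
  rw [← add_sub_cancel a b] at hb hb₂ heq
  exact not_eventuallyEq_weierstrassP_add L hab a
    (weierstrassP_eventuallyEq_add_of_two_mul_mem L ha hb ha₂ hb₂ heq)

lemma weierstrassP_cubic_of_two_mul_mem {a : ℂ} (ha : a ∉ L.lattice) (ha₂ : 2 * a ∈ L.lattice) :
    ℘[L] a ^ 3 + -L.g₂ / 4 * ℘[L] a + -L.g₃ / 4 = 0 := by
  have h := L.derivWeierstrassP_sq a ha
  rw [derivWeierstrassP_eq_zero_of_two_mul_mem L ha₂] at h
  linear_combination -h / 4

lemma g₂_eq_of_two_mul_mem {a b : ℂ} (ha : a ∉ L.lattice) (hb : b ∉ L.lattice)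
    (hab : a + b ∉ L.lattice) (ha₂ : 2 * a ∈ L.lattice) (hb₂ : 2 * b ∈ L.lattice) :
    L.g₂ = -4 * (℘[L] a * ℘[L] b + ℘[L] a * ℘[L] (a + b) + ℘[L] b * ℘[L] (a + b)) := by
  have hab₂ : 2 * (a + b) ∈ L.lattice := by
    rw [mul_add]
    exact add_mem ha₂ hb₂
  have hba : b - a ∉ L.lattice := fun h ↦ hab (by convert! add_mem h ha₂ using 1; ring)
  rw [sum_mul_eq_of_roots_depressed_cubic
    (weierstrassP_ne_of_two_mul_mem L ha hb ha₂ hb₂ hba)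
    (weierstrassP_ne_of_two_mul_mem L ha hab ha₂ hab₂ (by rwa [add_sub_cancel_left]))
    (weierstrassP_ne_of_two_mul_mem L hb hab hb₂ hab₂ (by rwa [add_sub_cancel_right]))
    (weierstrassP_cubic_of_two_mul_mem L ha ha₂) (weierstrassP_cubic_of_two_mul_mem L hb hb₂)
    (weierstrassP_cubic_of_two_mul_mem L hab hab₂)]
  ring

end Weierstrass

section Ramanujan

open UpperHalfPlane hiding I
open ModularForm EisensteinSeries Derivative Function.Periodic MatrixGroups Manifold

lemma tendsto_atImInfty_of_hasSum_qParam {f : ℍ → ℂ} {c : ℕ → ℂ} {h : ℝ} (hh : 0 < h)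
    (hf : ∀ τ : ℍ, HasSum (fun m ↦ c m • qParam h τ ^ m) (f τ)) :
    Tendsto f atImInfty (𝓝 (c 0)) := by
  let tail : ℍ → ℂ := fun τ ↦ ∑' m, c (m + 1) • qParam h τ ^ m
  have hsplit (τ : ℍ) : f τ = c 0 + qParam h τ * tail τ := by
    rw [← (hf τ).tsum_eq, (hf τ).summable.tsum_eq_zero_add, ← tsum_mul_left]
    simp only [pow_zero, smul_eq_mul, mul_one, add_right_inj]
    exact tsum_congr fun m ↦ by ring
  have htail : IsBoundedAtImInfty tail := by
    refine isBoundedAtImInfty_of_hasSum_qExpansion hh fun τ ↦ Summable.hasSum ?_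
    have hq : qParam h (τ : ℂ) ≠ 0 := qParam_ne_zero _
    refine (((summable_nat_add_iff 1).mpr (hf τ).summable).mul_left (qParam h τ)⁻¹).congr fun m ↦ ?_
    simp only [smul_eq_mul]
    field_simp
    ring
  rw [funext hsplit]
  simpa only [add_zero] using
    ((qParam_tendsto_atImInfty hh).zero_mul_isBoundedUnder_le htail.isBoundedUnder_le).const_add
      (c 0)

lemma tendsto_E2_atImInfty : Tendsto E2 atImInfty (𝓝 1) := by
  refine tendsto_atImInfty_of_hasSum_qParam
    (c := fun m ↦ if m = 0 then 1 else -24 * ArithmeticFunction.sigma 1 m) one_pos fun τ ↦ ?_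
  simpa only [qParam, ofReal_one, div_one] using hasSum_qExpansion_E2 (z := τ)

lemma tendsto_E₄_atImInfty : Tendsto E₄ atImInfty (𝓝 1) := by
  rw [← E_qExpansion_coeff_zero _ ⟨2, rfl⟩]
  exact tendsto_atImInfty_of_hasSum_qParam one_pos fun τ ↦
    ModularForm.hasSum_qExpansion E₄ one_pos one_mem_strictPeriods_SL τ

lemma isZeroAtImInfty_normalizedDerivOfComplex {F : ℍ → ℂ} (hF : MDiff F)
    (hbdd : IsBoundedAtImInfty F) : IsZeroAtImInfty (D F) := by
  obtain ⟨M, A, hM⟩ := isBoundedAtImInfty_iff.mp hbdd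
  rw [UpperHalfPlane.mdifferentiable_iff] at hF
  -- Cauchy's estimate on the disc of radius `im τ / 2` about `τ`
  have hderiv : ∀ᶠ τ : ℍ in atImInfty, ‖deriv (F ∘ ofComplex) τ‖ ≤ M / (τ.im / 2) := by
    filter_upwards [tendsto_comap.eventually_ge_atTop (2 * A)] with τ hτ
    have him : ∀ z ∈ Metric.closedBall (τ : ℂ) (τ.im / 2), τ.im / 2 ≤ z.im := fun z hz ↦ by
      have := (abs_im_le_norm (z - τ)).trans (mem_closedBall_iff_norm.mp hz)
      rw [sub_im, coe_im, abs_le] at this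
      linarith
    have hpos : 0 < τ.im / 2 := half_pos τ.im_pos
    refine norm_deriv_le_of_forall_mem_sphere_norm_le hpos
      (DifferentiableOn.diffContOnCl (hF.mono fun z hz ↦ ?_)) fun z hz ↦ ?_
    · exact hpos.trans_le (him z (Metric.closure_ball_subset_closedBall hz))
    · have hz' := him z (Metric.sphere_subset_closedBall hz)
      rw [Function.comp_apply, ofComplex_apply_of_im_pos (hpos.trans_le hz')]
      exact hM ⟨z, _⟩ ((by linarith : A ≤ τ.im / 2).trans hz')
  have hlim : Tendsto (fun τ : ℍ ↦ deriv (F ∘ ofComplex) τ) atImInfty (𝓝 0) :=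
    squeeze_zero_norm' hderiv
      ((tendsto_comap.atTop_div_const two_pos).const_div_atTop M)
  have hmul := hlim.const_mul (2 * Real.pi * I)⁻¹
  rwa [mul_zero] at hmul

lemma hasDerivAt_D2_comp_ofComplex (γ : SL(2, ℤ)) (z : ℍ) :
    HasDerivAt (D2 γ ∘ ofComplex) (-(2 * Real.pi * I)⁻¹ * D2 γ z ^ 2) z := by
  have hz : (γ 1 0 : ℂ) * z + γ 1 1 ≠ 0 := denom_ne_zero γ z
  have hD2 : D2 γ ∘ ofComplex =ᶠ[𝓝 (z : ℂ)]
      fun w ↦ (2 * Real.pi * I * γ 1 0) * ((γ 1 0 : ℂ) * w + γ 1 1)⁻¹ := by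
    filter_upwards [isOpen_upperHalfPlaneSet.mem_nhds z.im_pos] with w hw
    rw [Function.comp_apply, ofComplex_apply_of_im_pos hw]
    rfl
  have hlin : HasDerivAt (fun w : ℂ ↦ (γ 1 0 : ℂ) * w + γ 1 1) (γ 1 0) z := by
    simpa using ((hasDerivAt_id (z : ℂ)).const_mul (γ 1 0 : ℂ)).add_const (γ 1 1 : ℂ)
  refine (((hlin.fun_inv hz).const_mul _).congr_of_eventuallyEq hD2).congr_deriv ?_
  rw [D2, ModularGroup.denom_apply]
  field_simp

lemma mdifferentiable_D2 (γ : SL(2, ℤ)) : MDiff (D2 γ) := fun z ↦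
  UpperHalfPlane.mdifferentiableAt_iff.mpr (hasDerivAt_D2_comp_ofComplex γ z).differentiableAt

lemma normalizedDerivOfComplex_E2_slash (γ : SL(2, ℤ)) :
    D (E2 ∣[(2 : ℤ)] γ) = D E2 - (12 : ℂ)⁻¹ • (E2 - E2 ∣[(2 : ℤ)] γ) ^ 2 := by
  have hD2 : D (D2 γ) = (4 * (Real.pi : ℂ) ^ 2)⁻¹ • D2 γ ^ 2 := by
    ext z
    rw [normalizedDerivOfComplex, (hasDerivAt_D2_comp_ofComplex γ z).deriv, Pi.smul_apply,
      Pi.pow_apply, smul_eq_mul]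
    field_simp
    linear_combination -4 * D2 γ z ^ 2 * I_sq
  rw [E2_slash_action, normalizedDerivOfComplex_sub _ _ E2_mdifferentiable
    ((mdifferentiable_D2 γ).const_smul _), normalizedDerivOfComplex_smul _ _ (mdifferentiable_D2 γ),
    hD2, sub_sub_cancel, smul_pow, smul_smul, smul_smul, riemannZeta_two]
  congr 2
  field_simp
  norm_num

lemma serreDerivative_one_E2_slash (γ : SL(2, ℤ)) :
    serreDerivative 1 E2 ∣[(4 : ℤ)] γ = serreDerivative 1 E2 := by
  have hserre : serreDerivative 1 E2 = serreDerivative 2 E2 + (12 : ℂ)⁻¹ • (E2 * E2) := by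
    ext z
    simp only [serreDerivative_apply, Pi.add_apply, Pi.smul_apply, Pi.mul_apply, smul_eq_mul]
    ring
  have hslash : serreDerivative 1 E2 ∣[(4 : ℤ)] γ =
      serreDerivative 2 (E2 ∣[(2 : ℤ)] γ) + (12 : ℂ)⁻¹ • (E2 ∣[(2 : ℤ)] γ) ^ 2 := by
    rw [hserre, SlashAction.add_slash, SL_smul_slash, sq]
    exact congrArg₂ _ (serreDerivative_slash_equivariant (k := 2) E2_mdifferentiable)
      (congrArg _ (mul_slash_SL2 2 2 γ E2 E2))
  rw [hslash]
  ext z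
  simp only [serreDerivative_apply, normalizedDerivOfComplex_E2_slash, Pi.add_apply, Pi.sub_apply,
    Pi.smul_apply, Pi.pow_apply, smul_eq_mul]
  ring

lemma tendsto_serreDerivative_one_E2_atImInfty :
    Tendsto (serreDerivative 1 E2) atImInfty (𝓝 (-12⁻¹)) := by
  have hD : Tendsto (D E2) atImInfty (𝓝 0) := isZeroAtImInfty_normalizedDerivOfComplex
    E2_mdifferentiable (tendsto_E2_atImInfty.isBigO_one ℝ)
  rw [show (-12⁻¹ : ℂ) = 0 - 1 * 12⁻¹ * 1 * 1 by ring]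
  exact hD.sub ((tendsto_E2_atImInfty.const_mul _).mul tendsto_E2_atImInfty)

/-- The Serre derivative `∂₁E₂ = D E₂ - E₂² / 12` as a modular form of weight 4. The index is 1,
half the weight of `E₂`, which compensates for `E₂` being only quasimodular. -/
noncomputable def serreDerivativeOneE2 : ModularForm 𝒮ℒ 4 where
  toFun := serreDerivative 1 E2
  slash_action_eq' := fun _ ⟨γ, hγ⟩ ↦ hγ ▸ serreDerivative_one_E2_slash γ
  holo' := serreDerivative_mdifferentiable 1 E2_mdifferentiable
  bdd_at_cusps' := fun {c} hc ↦ by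
    rw [Subgroup.IsArithmetic.isCusp_iff_isCusp_SL2Z] at hc
    rw [OnePoint.isBoundedAt_iff_forall_SL2Z hc]
    intro γ _
    rw [serreDerivative_one_E2_slash γ]
    exact tendsto_serreDerivative_one_E2_atImInfty.isBigO_one ℝ

lemma normalizedDerivOfComplex_E2 (z : ℍ) : D E2 z = (E2 z ^ 2 - E₄ z) / 12 := by
  obtain ⟨c, hc⟩ : ∃ c : ℂ, c • E₄ = serreDerivativeOneE2 :=
    (finrank_eq_one_iff_of_nonzero' E₄ (E_ne_zero _ ⟨2, rfl⟩)).mp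
      (Module.rank_eq_one_iff_finrank_eq_one.mp levelOne_weight_four_rank_one) _
  have hserre (w : ℍ) : c * E₄ w = serreDerivative 1 E2 w := DFunLike.congr_fun hc w
  have hc' : c = -12⁻¹ := by
    have hlim := tendsto_E₄_atImInfty.const_mul c
    rw [funext hserre, mul_one] at hlim
    exact tendsto_nhds_unique hlim tendsto_serreDerivative_one_E2_atImInfty
  have hz := hserre z
  rw [hc', serreDerivative_apply] at hz
  linear_combination -hz

end Ramanujan

section Telescoping

lemma hasSum_int_sub_of_summable {E : Type*} [AddCommGroup E] [TopologicalSpace E]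
    [IsTopologicalAddGroup E] [T2Space E] {f : ℤ → E} {a : E}
    (hs : Summable fun m ↦ f m - f (m + 1)) (hf : Tendsto f cofinite (𝓝 a)) :
    HasSum (fun m ↦ f m - f (m + 1)) 0 := by
  rw [Int.cofinite_eq, tendsto_sup] at hf
  have hcast := tendsto_natCast_atTop_atTop (R := ℤ)
  have hlim : Tendsto (fun N : ℕ ↦ f (-N) - f N) atTop (𝓝 0) := by
    rw [← sub_self a]
    exact (hf.1.comp (tendsto_neg_atTop_atBot.comp hcast)).sub (hf.2.comp hcast)
  have hpartial := (hs.hasSum.comp Finset.tendsto_Ico_neg).congr fun N ↦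
    Finset.sum_Ico_int_sub N f
  rw [tendsto_nhds_unique hlim hpartial]
  exact hs.hasSum

lemma tendsto_one_div_add_intCast_cofinite (a : ℂ) :
    Tendsto (fun m : ℤ ↦ 1 / (a + m)) cofinite (𝓝 0) := by
  have hcob : Tendsto (fun m : ℤ ↦ a + m) cofinite (Bornology.cobounded ℂ) := by
    rw [Int.cofinite_eq]
    exact (tendsto_const_add_cobounded a).comp tendsto_intCast_atBot_sup_atTop_cobounded
  simp only [one_div]
  exact tendsto_inv₀_cobounded.comp hcob

lemma hasSum_one_div_sub_one_div {a : ℂ}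
    (hs : Summable fun m : ℤ ↦ 1 / (a + m) - 1 / (a + m + 1)) :
    HasSum (fun m : ℤ ↦ 1 / (a + m) - 1 / (a + m + 1)) 0 := by
  have hshift (m : ℤ) : a + m + 1 = a + (m + 1 : ℤ) := by
    push_cast
    ring
  simp only [hshift] at hs ⊢
  exact hasSum_int_sub_of_summable hs (tendsto_one_div_add_intCast_cofinite a)

end Telescoping

section Integral

lemma hasDerivAt_neg_one_div_add_ofReal {a : ℂ} {x : ℝ} (hx : a + x ≠ 0) :
    HasDerivAt (fun x : ℝ ↦ -(1 / (a + x))) (1 / (a + x) ^ 2) x := by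
  have h : HasDerivAt (fun z : ℂ ↦ -(1 / (a + z))) (1 / (a + x) ^ 2) (x : ℂ) := by
    simp only [one_div]
    exact (((hasDerivAt_id (x : ℂ)).const_add a).fun_inv hx).neg.congr_deriv (by simp [neg_div])
  exact h.comp_ofReal

lemma continuous_one_div_add_ofReal_sq {a : ℂ} (h : ∀ x : ℝ, a + x ≠ 0) :
    Continuous fun x : ℝ ↦ 1 / (a + x) ^ 2 :=
  continuous_const.div (by fun_prop) fun x ↦ pow_ne_zero 2 (h x)

lemma integral_one_div_add_ofReal_sq {a : ℂ} (h : ∀ x : ℝ, a + x ≠ 0) (b c : ℝ) :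
    ∫ x : ℝ in b..c, 1 / (a + x) ^ 2 = 1 / (a + b) - 1 / (a + c) := by
  rw [intervalIntegral.integral_eq_sub_of_hasDerivAt
    (fun x _ ↦ hasDerivAt_neg_one_div_add_ofReal (h x))
    ((continuous_one_div_add_ofReal_sq h).intervalIntegrable b c)]
  ring

lemma hasSum_intervalIntegral_weierstrassP (L : PeriodPair) {γ : ℝ → ℂ} (hγ : Continuous γ)
    {a b : ℝ} (hL : ∀ x ∈ Set.uIcc a b, γ x ∉ L.lattice) :
    HasSum (fun l : L.lattice ↦ ∫ x in a..b, (1 / (γ x - l) ^ 2 - 1 / (l : ℂ) ^ 2))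
      (∫ x in a..b, ℘[L] (γ x)) := by
  have : Countable L.lattice := .of_equiv _ L.latticeEquivProd.symm.toEquiv
  have hcont (l : L.lattice) :
      ContinuousOn (fun x ↦ 1 / (γ x - l) ^ 2 - 1 / (l : ℂ) ^ 2) (Set.uIcc a b) :=
    (continuousOn_const.div (by fun_prop) fun x hx ↦
      pow_ne_zero 2 (sub_ne_zero.mpr fun h : γ x = l ↦ hL x hx (h ▸ l.2))).sub continuousOn_const
  have hunif : TendstoUniformlyOn
      (fun (s : Finset L.lattice) x ↦ ∑ l ∈ s, (1 / (γ x - l) ^ 2 - 1 / (l : ℂ) ^ 2))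
      (fun x ↦ ℘[L] (γ x)) atTop (Set.uIcc a b) :=
    (tendstoLocallyUniformlyOn_iff_tendstoUniformlyOn_of_compact isCompact_uIcc).mp
      ((hasSumLocallyUniformly_iff_tendstoLocallyUniformly.mp
        L.hasSumLocallyUniformly_weierstrassP).comp γ hγ).tendstoLocallyUniformlyOn
  refine (hunif.tendsto_intervalIntegral_of_continuousOn (μ := MeasureTheory.volume)
    (.of_forall fun s ↦ continuousOn_finsetSum s fun l _ ↦ hcont l)).congr fun s ↦ ?_
  exact intervalIntegral.integral_finsetSum fun l _ ↦ (hcont l).intervalIntegrable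

end Integral

section QuasiPeriod

open UpperHalfPlane hiding I
open EisensteinSeries

/-- The period pair `(1, τ)`, whose lattice is `ℤ + τℤ`. -/
noncomputable def standardPeriodPair (τ : ℍ) : PeriodPair where
  ω₁ := 1
  ω₂ := τ
  indep := LinearIndependent.pair_iff.mpr fun a b h ↦ by
    have hb : b = 0 := by simpa [τ.im_ne_zero] using congrArg Complex.im h
    subst hb
    simpa using h

lemma coe_latticeEquivProd_symm_standardPeriodPair (τ : ℍ) (w : ℤ × ℤ) :
    ((standardPeriodPair τ).latticeEquivProd.symm w : ℂ) = w.1 + w.2 * τ := by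
  rw [PeriodPair.latticeEquiv_symm_apply]
  simp only [standardPeriodPair, mul_one]

lemma mem_lattice_standardPeriodPair (τ : ℍ) (z : ℂ) :
    z ∈ (standardPeriodPair τ).lattice ↔ InLattice τ z := by
  simp only [PeriodPair.mem_lattice, standardPeriodPair, mul_one, InLattice, eq_comm]

lemma wp_eq_weierstrassP (τ : ℍ) (z : ℂ) : wp τ z = ℘[standardPeriodPair τ] z := by
  have h := (standardPeriodPair τ).latticeEquivProd.symm.toEquiv.hasSum_iff.mpr
    ((standardPeriodPair τ).hasSum_weierstrassP z)
  simp only [Function.comp_def, LinearEquiv.coe_toEquiv,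
    coe_latticeEquivProd_symm_standardPeriodPair] at h
  rw [wp, ← h.tsum_eq, ← h.summable.tsum_subtype_add_tsum_subtype_compl {0}]
  congr 1
  · simp
  · simp only [inv_pow, one_div]
    rfl

lemma G_four_standardPeriodPair (τ : ℍ) :
    (standardPeriodPair τ).G 4 = Real.pi ^ 4 / 45 * ModularForm.E₄ τ := by
  have hG : (standardPeriodPair τ).G 4 = ∑' v : Fin 2 → ℤ, eisSummand (4 : ℕ) v τ := by
    rw [PeriodPair.G, ← (standardPeriodPair τ).latticeEquivProd.symm.toEquiv.tsum_eq,
      ← ((finTwoArrowEquiv ℤ).trans (Equiv.prodComm ℤ ℤ)).tsum_eq]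
    refine tsum_congr fun v ↦ ?_
    simp only [LinearEquiv.coe_toEquiv, coe_latticeEquivProd_symm_standardPeriodPair, eisSummand]
    simp [add_comm]
  have hE : ModularForm.E₄ τ = 1 / 2 * eisensteinSeries (N := 1) 0 (4 : ℕ) τ := rfl
  rw [hG, tsum_eisSummand_eq_riemannZeta_mul_eisensteinSeries (by norm_num) τ, hE, Nat.cast_ofNat,
    riemannZeta_four]
  push_cast
  ring

lemma g2_eq_E₄ (τ : ℍ) : g2 τ = 4 * Real.pi ^ 4 / 3 * ModularForm.E₄ τ := by
  let L := standardPeriodPair τ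
  have hsum : (1 : ℂ) / 2 + τ / 2 ∉ L.lattice := by
    convert! (L.mul_ω₁_add_mul_ω₂_mem_lattice (α := 1 / 2) (β := 1 / 2)).not.mpr (by norm_num)
      using 2
    simp only [L, standardPeriodPair]
    push_cast
    ring
  have h := g₂_eq_of_two_mul_mem L L.ω₁_div_two_notMem_lattice L.ω₂_div_two_notMem_lattice hsum
    (by rw [mul_div_cancel₀ _ two_ne_zero]; exact L.ω₁_mem_lattice)
    (by rw [mul_div_cancel₀ _ two_ne_zero]; exact L.ω₂_mem_lattice)
  have hg₂ : g2 τ = L.g₂ := by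
    rw [h, g2, e1, e2, e3, wp_eq_weierstrassP, wp_eq_weierstrassP, wp_eq_weierstrassP, add_div]
    rfl
  rw [hg₂, PeriodPair.g₂, G_four_standardPeriodPair]
  ring

lemma G2_eq_E2 (τ : ℍ) : G2 τ = Real.pi ^ 2 / 3 * E2 τ := by
  have hpi : (Real.pi : ℂ) ≠ 0 := ofReal_ne_zero.mpr Real.pi_ne_zero
  rw [E2, Pi.smul_apply, riemannZeta_two, smul_eq_mul]
  field_simp
  ring

variable {τ : ℍ} {z : ℂ}

lemma add_ofReal_notMem_lattice (hz : ∀ n : ℤ, z.im ≠ n * τ.im) (x : ℝ) :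
    z + x ∉ (standardPeriodPair τ).lattice := by
  rw [mem_lattice_standardPeriodPair]
  rintro ⟨m, n, h⟩
  exact hz n (by simpa using congrArg Complex.im h)

lemma hasSum_integral_weierstrassP_standardPeriodPair (hz : ∀ n : ℤ, z.im ≠ n * τ.im) :
    HasSum (fun w : ℤ × ℤ ↦ 1 / (z + w.1 * τ + w.2) - 1 / (z + w.1 * τ + w.2 + 1) -
      eisSummand 2 ![w.1, w.2] τ) (∫ x : ℝ in 0..1, ℘[standardPeriodPair τ] (z + x)) := by
  let e : ℤ × ℤ ≃ (standardPeriodPair τ).lattice := ((Equiv.prodComm ℤ ℤ).trans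
    (standardPeriodPair τ).latticeEquivProd.symm.toEquiv).trans (Equiv.neg _)
  have he (w : ℤ × ℤ) : (e w : ℂ) = -(w.1 * τ + w.2) := by
    rw [add_comm]
    exact congrArg Neg.neg (coe_latticeEquivProd_symm_standardPeriodPair τ w.swap)
  have hne (w : ℤ × ℤ) (x : ℝ) : z + w.1 * τ + w.2 + x ≠ 0 := by
    intro h
    refine hz (-w.1) ?_
    have him : z.im + w.1 * τ.im = 0 := by simpa using congrArg Complex.im h
    push_cast
    linear_combination him
  have hterm (w : ℤ × ℤ) : ∫ x : ℝ in 0..1, (1 / (z + x - e w) ^ 2 - 1 / (e w : ℂ) ^ 2) =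
      1 / (z + w.1 * τ + w.2) - 1 / (z + w.1 * τ + w.2 + 1) - eisSummand 2 ![w.1, w.2] τ := by
    have hint := (continuous_one_div_add_ofReal_sq (hne w)).intervalIntegrable
      (μ := MeasureTheory.volume) 0 1
    have heis : eisSummand 2 ![w.1, w.2] τ = 1 / (e w : ℂ) ^ 2 := by
      rw [he, neg_sq, one_div]
      rfl
    have hshift (x : ℝ) : z + x - e w = z + w.1 * τ + w.2 + x := by
      rw [he]
      ring
    simp only [hshift]
    rw [intervalIntegral.integral_sub hint (by simp), integral_one_div_add_ofReal_sq (hne w), heis]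
    simp
  have hsum := e.hasSum_iff.mpr (hasSum_intervalIntegral_weierstrassP (standardPeriodPair τ)
    (γ := fun x ↦ z + x) (by fun_prop) (a := 0) (b := 1) fun x _ ↦ add_ofReal_notMem_lattice hz x)
  simpa only [Function.comp_def, hterm] using hsum

lemma integral_weierstrassP_standardPeriodPair (hz : ∀ n : ℤ, z.im ≠ n * τ.im) :
    ∫ x : ℝ in 0..1, ℘[standardPeriodPair τ] (z + x) = -G2 τ := by
  have hsum := hasSum_integral_weierstrassP_standardPeriodPair hz
  have hrow (n : ℤ) : HasSum (fun m : ℤ ↦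
      1 / (z + n * τ + m) - 1 / (z + n * τ + m + 1) - eisSummand 2 ![n, m] τ)
      (-e2Summand n τ) := by
    have hs := (hsum.summable.prod_factor n).add (e2Summand_summable n τ)
    simp only [sub_add_cancel] at hs
    have hrow_sub := (hasSum_one_div_sub_one_div hs).sub (e2Summand_summable n τ).hasSum
    rw [zero_sub] at hrow_sub
    exact hrow_sub
  have hG := (hsum.prod_fiberwise hrow).neg
  simp only [neg_neg] at hG
  rw [G2, tsum_eq_of_summable_unconditional hG.summable, hG.tsum_eq, neg_neg]

lemma sub_eq_G2_of_hasDerivAt {Z : ℂ → ℂ} (hz : ∀ n : ℤ, z.im ≠ n * τ.im)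
    (hZ : ∀ w, ¬ InLattice τ w → HasDerivAt Z (-wp τ w) w) : Z (z + 1) - Z z = G2 τ := by
  have hL := add_ofReal_notMem_lattice hz
  have hderiv (x : ℝ) :
      HasDerivAt (fun x : ℝ ↦ Z (z + x)) (-℘[standardPeriodPair τ] (z + x)) x := by
    have h := hZ (z + x) ((mem_lattice_standardPeriodPair τ _).not.mp (hL x))
    rw [wp_eq_weierstrassP] at h
    exact (h.comp_const_add z (x : ℂ)).comp_ofReal
  have hcont : Continuous fun x : ℝ ↦ ℘[standardPeriodPair τ] (z + x) :=
    (standardPeriodPair τ).differentiableOn_weierstrassP.continuousOn.comp_continuous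
      (by fun_prop) hL
  have hint := intervalIntegral.integral_eq_sub_of_hasDerivAt (fun x _ ↦ hderiv x)
    (hcont.neg.intervalIntegrable 0 1)
  rw [intervalIntegral.integral_neg, integral_weierstrassP_standardPeriodPair hz, neg_neg,
    ofReal_one, ofReal_zero, add_zero] at hint
  exact hint.symm

lemma eta1_eq_E2 {zeta : ℂ → ℂ → ℂ} {eta1 : ℂ → ℂ} (hzeta : IsWeierstrassZeta zeta)
    (heta1 : IsEta1 zeta eta1) (τ : ℍ) : eta1 τ = Real.pi ^ 2 / 3 * E2 τ := by
  have him (n : ℤ) : ((τ : ℂ) / 2).im ≠ n * τ.im := by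
    intro h
    have hodd : ((1 - 2 * n : ℤ) : ℝ) * τ.im = 0 := by
      have h' : τ.im / 2 = n * τ.im := by simpa using h
      push_cast
      linear_combination 2 * h'
    have := (mul_eq_zero_iff_right τ.im_ne_zero).mp hodd
    norm_cast at this
    omega
  have hτ : ¬ InLattice τ (τ / 2) := by
    simpa [mem_lattice_standardPeriodPair] using add_ofReal_notMem_lattice him 0
  rw [heta1 τ τ.im_pos _ hτ, sub_eq_G2_of_hasDerivAt him (hzeta τ τ.im_pos).2.1, G2_eq_E2]

lemma hasDerivAt_E2_comp_ofComplex (τ : ℍ) :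
    HasDerivAt (E2 ∘ ofComplex)
      (2 * Real.pi * I * ((E2 τ ^ 2 - ModularForm.E₄ τ) / 12)) τ := by
  rw [← normalizedDerivOfComplex_E2, Derivative.normalizedDerivOfComplex,
    mul_inv_cancel_left₀ two_pi_I_ne_zero]
  exact (UpperHalfPlane.mdifferentiableAt_iff.mp (E2_mdifferentiable τ)).hasDerivAt

end QuasiPeriod

/-- Lemma 2.3 (v): `η₁` is holomorphic in `τ` and
`dη₁/dτ = (i/(4π))(2η₁² - g₂/6)`. -/
theorem tau_deriv_eta1
    (zeta : ℂ → ℂ → ℂ) (eta1 : ℂ → ℂ)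
    (hzeta : IsWeierstrassZeta zeta) (heta1 : IsEta1 zeta eta1) :
    DifferentiableOn ℂ eta1 {τ : ℂ | 0 < τ.im} ∧
    ∀ τ : ℂ, 0 < τ.im →
      HasDerivAt eta1
        ((Complex.I / (4 * (Real.pi : ℂ))) *
          (2 * (eta1 τ) ^ 2 - (1 / 6) * g2 τ)) τ := by
  suffices h : ∀ τ : UpperHalfPlane, HasDerivAt eta1
      ((Complex.I / (4 * (Real.pi : ℂ))) * (2 * (eta1 τ) ^ 2 - (1 / 6) * g2 τ)) τ from
    ⟨fun τ hτ ↦ (h ⟨τ, hτ⟩).differentiableAt.differentiableWithinAt, fun τ hτ ↦ h ⟨τ, hτ⟩⟩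
  intro τ
  have heq : eta1 =ᶠ[𝓝 (τ : ℂ)] fun w ↦
      (Real.pi : ℂ) ^ 2 / 3 * (EisensteinSeries.E2 ∘ UpperHalfPlane.ofComplex) w := by
    filter_upwards [UpperHalfPlane.isOpen_upperHalfPlaneSet.mem_nhds τ.im_pos] with w hw
    rw [Function.comp_apply, UpperHalfPlane.ofComplex_apply_of_im_pos hw]
    exact eta1_eq_E2 hzeta heta1 ⟨w, hw⟩
  refine (((hasDerivAt_E2_comp_ofComplex τ).const_mul _).congr_of_eventuallyEq heq).congr_deriv ?_
  have hpi : (Real.pi : ℂ) ≠ 0 := ofReal_ne_zero.mpr Real.pi_ne_zero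
  rw [eta1_eq_E2 hzeta heta1, g2_eq_E₄]
  field_simp
  ring
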